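/- Let k ∈ ℕ and set l := 4k. Let P be a polynomial with real coefficients of degree < l and let μ be a finite positive Borel measure on [−1, 1]. Let A, B be bounded self-adjoint operators on H with the spectrum of A contained in (−1, 1), and set X := A + iB. Then for every λ ∈ [−1, 1] the operators I − λX and I − λ(A + tB) (for real t near 0) are invertible, the Bochner integrals defining f(Y) := P(Y) + ∫_{[−1,1]} Y^{l} (I − λY)^{-1} dμ(λ) exist for Y = X and Y = A + tB, and Re f(X) ≥ Σ_{m=0}^{2k−1} ((−1)^m / (2m)!) · D^{2m}f(A;B), where D^{m}f(A;B) denotes the m-th derivative at t = 0 of the map t ↦ f(A + tB). -/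

import Mathlib

open ContinuousLinearMap MeasureTheory

variable {H : Type*} [NormedAddCommGroup H] [InnerProductSpace ℂ H] [CompleteSpace H]

/-- The real part `(Y + Y*)/2` of a bounded operator. -/
noncomputable def opRe (Y : H →L[ℂ] H) : H →L[ℂ] H := (2 : ℂ)⁻¹ • (Y + star Y)

/-- The operator function `Y ↦ P(Y) + ∫_{[−1,1]} Y^l (I − λY)⁻¹ dμ(λ)`, the integral
representation of an operator `l`-tone function on `(−1,1)`. -/
noncomputable def fcal (P : Polynomial ℝ) (μ : Measure ℝ) (l : ℕ) (Y : H →L[ℂ] H) :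
    H →L[ℂ] H :=
  Polynomial.aeval Y (P.map Complex.ofRealHom) +
    ∫ s, Y ^ l * Ring.inverse (1 - (s : ℂ) • Y) ∂μ

/-!
Let `n = 2m` be the power in the integrand of `f`. Expanding the resolvents around `A` gives the
exact Taylor formula `f(A + zB) = ∑_{j<n} zʲ Dʲf(A;B)/j! + zⁿ ∫ (Q B)ⁿ S dμ(λ)`, where
`Q = (1 - λA)⁻¹` and `S = (1 - λ(A + zB))⁻¹`, both for real `z` near `0` and for `z = i`. At `z = i`
the odd terms are skew-adjoint, so the real part of the Taylor polynomial is the alternating sum of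
the even terms. Since `S⁻¹ = Q⁻¹ - λz B`, we have `S (B Q) = (Q B) S`; moving half of the factors
through turns the integrand of the remainder into `(Q B)ᵐ S ((Q B)ᵐ)*`, whose real part is positive
because `Re S⁻¹ = 1 - λA > 0`.
-/

open Complex Polynomial Topology
open scoped Ring ComplexStarModule

section Algebra

variable {𝕜 R : Type*} [CommRing 𝕜] [Ring R] [Algebra 𝕜 R] {s : 𝕜} {A B Y : R}

lemma commute_inverse_one_sub_smul (s : 𝕜) (Y : R) : Commute Y (1 - s • Y)⁻¹ʳ := by
  by_cases h : IsUnit (1 - s • Y)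
  · obtain ⟨u, hu⟩ := h
    rw [← hu, Ring.inverse_unit]
    exact Commute.units_inv_right <|
      hu ▸ (Commute.one_right Y).sub_right ((Commute.refl Y).smul_right s)
  · rw [Ring.inverse_non_unit _ h]
    exact Commute.zero_right Y

lemma mul_inverse_one_sub_smul (hA : IsUnit (1 - s • A)) (hY : IsUnit (1 - s • Y)) :
    Y * (1 - s • Y)⁻¹ʳ =
      (1 - s • A)⁻¹ʳ * A + (1 - s • A)⁻¹ʳ * (Y - A) * (1 - s • Y)⁻¹ʳ := by
  have key : (1 - s • A) * Y = A * (1 - s • Y) + (Y - A) := by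
    simp only [sub_mul, mul_sub, one_mul, mul_one, smul_mul_assoc, mul_smul_comm]
    abel
  calc Y * (1 - s • Y)⁻¹ʳ
      = (1 - s • A)⁻¹ʳ * ((1 - s • A) * Y) * (1 - s • Y)⁻¹ʳ := by
        rw [Ring.inverse_mul_cancel_left _ _ hA]
    _ = _ := by
        rw [key, mul_add, add_mul, ← mul_assoc, Ring.mul_inverse_cancel_right _ _ hY]

lemma pow_mul_inverse_one_sub_smul (hA : IsUnit (1 - s • A)) (hY : IsUnit (1 - s • Y)) (n : ℕ) :
    Y ^ n * (1 - s • Y)⁻¹ʳ =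
      ∑ m ∈ Finset.range n,
        ((1 - s • A)⁻¹ʳ * (Y - A)) ^ m * (1 - s • A)⁻¹ʳ * A * Y ^ (n - 1 - m) +
      ((1 - s • A)⁻¹ʳ * (Y - A)) ^ n * (1 - s • Y)⁻¹ʳ := by
  induction n with
  | zero => simp
  | succ n ih =>
    have shift : ∀ m ∈ Finset.range n, Y ^ (n - m) = Y ^ (n - 1 - m) * Y := fun m hm => by
      rw [← pow_succ]; congr 1; have := Finset.mem_range.1 hm; omega
    set Q := (1 - s • A)⁻¹ʳ
    set S := (1 - s • Y)⁻¹ʳ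
    calc Y ^ (n + 1) * S = Y ^ n * S * Y := by
          rw [pow_succ, mul_assoc, mul_assoc, (commute_inverse_one_sub_smul s Y).eq]
      _ = ∑ m ∈ Finset.range n, (Q * (Y - A)) ^ m * Q * A * Y ^ (n - m) +
            (Q * (Y - A)) ^ n * (Y * S) := by
          rw [ih, add_mul, Finset.sum_mul, mul_assoc (_ ^ n),
            ← (commute_inverse_one_sub_smul s Y).eq]
          congr 1
          exact Finset.sum_congr rfl fun m hm => by rw [shift m hm]; simp only [mul_assoc]
      _ = _ := by
          rw [mul_inverse_one_sub_smul hA hY, Finset.sum_range_succ, pow_succ _ n]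
          simp [mul_add, mul_assoc, add_assoc, Q, S]

lemma semiconjBy_inverse_one_sub_smul_add {z : 𝕜} (hA : IsUnit (1 - s • A))
    (hY : IsUnit (1 - s • (A + z • B))) :
    SemiconjBy (1 - s • (A + z • B))⁻¹ʳ (B * (1 - s • A)⁻¹ʳ) ((1 - s • A)⁻¹ʳ * B) := by
  have key : SemiconjBy (1 - s • (A + z • B)) ((1 - s • A)⁻¹ʳ * B) (B * (1 - s • A)⁻¹ʳ) := by
    have split : 1 - s • (A + z • B) = (1 - s • A) - (s * z) • B := by
      rw [smul_add, smul_smul, sub_sub]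
    rw [SemiconjBy, split, sub_mul, mul_sub, Ring.mul_inverse_cancel_left _ _ hA,
      mul_assoc B _ (1 - s • A), Ring.inverse_mul_cancel _ hA]
    simp only [mul_one, smul_mul_assoc, mul_smul_comm, mul_assoc]
  obtain ⟨u, hu⟩ := hY
  rw [← hu] at key ⊢
  rw [Ring.inverse_unit]
  exact key.units_inv_symm_left

end Algebra

section Pencil

variable {𝕜 R : Type*} [CommRing 𝕜] [Ring R] [Algebra 𝕜 R]

/-- The polynomial `A + z B` in a central indeterminate `z`, whose values parametrize the line
through `A` in direction `B`. -/
noncomputable def pencil (A B : R) : R[X] := C B * X + C A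

/-- Evaluation at a scalar `z` of a polynomial with coefficients in a noncommutative algebra; it is
multiplicative because `z` is central. -/
noncomputable def evalScalar (z : 𝕜) : R[X] →ₐ[𝕜] R :=
  eval₂AlgHom (AlgHom.id 𝕜 R) (algebraMap 𝕜 R z) fun a => (Algebra.commutes z a).symm

lemma evalScalar_C (z : 𝕜) (a : R) : evalScalar z (C a) = a :=
  eval₂_C _ _

lemma evalScalar_X (z : 𝕜) : evalScalar z (X : R[X]) = algebraMap 𝕜 R z :=
  eval₂_X _ _

lemma evalScalar_pencil (A B : R) (z : 𝕜) : evalScalar z (pencil A B) = A + z • B := by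
  rw [pencil, map_add, map_mul, evalScalar_C, evalScalar_C, evalScalar_X, ← Algebra.commutes,
    ← Algebra.smul_def, add_comm]

lemma evalScalar_aeval_pencil (z : 𝕜) (A B : R) (p : 𝕜[X]) :
    evalScalar z (aeval (pencil A B) p) = aeval (A + z • B) p := by
  rw [← evalScalar_pencil, aeval_algHom_apply]

lemma evalScalar_eq_sum_range {p : R[X]} {n : ℕ} (hp : p.degree < n) (z : 𝕜) :
    evalScalar z p = ∑ j ∈ Finset.range n, z ^ j • p.coeff j := by
  rcases eq_or_ne p 0 with rfl | hp0
  · simp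
  have hn : p.natDegree < n := (natDegree_lt_iff_degree_lt hp0).2 hp
  conv_lhs => rw [p.as_sum_range' n hn]
  refine (map_sum _ _ _).trans <| Finset.sum_congr rfl fun j _ => ?_
  rw [← C_mul_X_pow_eq_monomial, map_mul, map_pow, evalScalar_C, evalScalar_X, ← map_pow,
    ← Algebra.commutes, Algebra.smul_def]

lemma degree_pencil_pow_le (A B : R) (i : ℕ) : (pencil A B ^ i).degree ≤ i := by
  simpa [pencil] using degree_pow_le_of_le i (degree_linear_le (a := B) (b := A))

lemma degree_aeval_pencil_lt (A B : R) {P : 𝕜[X]} {n : ℕ} (hP : P.degree < n) :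
    (aeval (pencil A B) P).degree < n := by
  rw [← mem_degreeLT, aeval_def, eval₂_eq_sum, Polynomial.sum_def]
  refine Submodule.sum_mem _ fun i hi => ?_
  rw [mem_degreeLT, ← Algebra.smul_def]
  exact (degree_smul_le _ _).trans_lt <| (degree_pencil_pow_le A B i).trans_lt <|
    (le_degree_of_mem_supp i hi).trans_lt hP

end Pencil

section Analysis

lemma exists_forall_abs_lt_of_eventually_nhds_zero {p : ℝ → Prop} (h : ∀ᶠ t in 𝓝 0, p t) :
    ∃ δ > (0 : ℝ), ∀ t : ℝ, |t| < δ → p t := by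
  obtain ⟨δ, hδ, hp⟩ := Metric.eventually_nhds_iff.1 h
  exact ⟨δ, hδ, fun t ht => hp (by simpa using ht)⟩

variable {𝕜 E : Type*} [NontriviallyNormedField 𝕜] [CharZero 𝕜] [NormedAddCommGroup E]
  [NormedSpace 𝕜 E] [CompleteSpace E]

lemma iteratedDeriv_zero_of_eventuallyEq_sum_add_pow_smul {f g : 𝕜 → E} {c : ℕ → E} {n : ℕ}
    (hg : AnalyticAt 𝕜 g 0)
    (hf : ∀ᶠ t in 𝓝 0, f t = ∑ j ∈ Finset.range n, t ^ j • c j + t ^ n • g t) {m : ℕ}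
    (hm : m < n) : iteratedDeriv m f 0 = (m.factorial : 𝕜) • c m := by
  have hpoly : iteratedDeriv m (fun t : 𝕜 => ∑ j ∈ Finset.range n, t ^ j • c j) 0 =
      (m.factorial : 𝕜) • c m := by
    rw [iteratedDeriv_fun_sum fun j _ => by fun_prop]
    have hterm : ∀ j, iteratedDeriv m (fun t : 𝕜 => t ^ j • c j) 0 =
        if j = m then (m.factorial : 𝕜) • c m else 0 := fun j => by
      rw [iteratedDeriv_smul_const (f := fun t : 𝕜 => t ^ j) (by fun_prop),
        iteratedDeriv_fun_pow_zero]
      rcases eq_or_ne j m with rfl | hjm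
      · simp
      · simp [hjm, hjm.symm]
    simp only [hterm, Finset.sum_ite_eq', Finset.mem_range, hm, if_true]
  have hrem : AnalyticAt 𝕜 (fun t : 𝕜 => t ^ n • g t) 0 := (analyticAt_id.pow n).smul hg
  have hvanish : iteratedDeriv m (fun t : 𝕜 => t ^ n • g t) 0 = 0 :=
    (natCast_le_analyticOrderAt_iff_iteratedDeriv_eq_zero hrem).1
      ((natCast_le_analyticOrderAt hrem).2 ⟨g, hg, by simp⟩) m hm
  rw [Filter.EventuallyEq.iteratedDeriv_eq m hf,
    iteratedDeriv_fun_add (by fun_prop) hrem.contDiffAt, hpoly, hvanish, add_zero]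

end Analysis

lemma continuousMap_inverse_apply {α R : Type*} [TopologicalSpace α] [Ring R] [TopologicalSpace R]
    [IsTopologicalRing R] {f : C(α, R)} (hf : IsUnit f) (x : α) : f⁻¹ʳ x = (f x)⁻¹ʳ := by
  have hfx : IsUnit (f x) := hf.map ((Pi.evalMonoidHom _ x).comp ContinuousMap.coeFnMonoidHom)
  rw [← mul_one (f x)⁻¹ʳ, eq_comm, Ring.inverse_mul_eq_iff_eq_mul _ _ _ hfx,
    ← ContinuousMap.mul_apply, Ring.mul_inverse_cancel _ hf, ContinuousMap.one_apply]

section IntegralOnCompact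

variable {α E : Type*} [TopologicalSpace α] [MeasurableSpace α] [NormedAddCommGroup E]

lemma integrable_of_continuousOn_of_ae_mem [T2Space α] [OpensMeasurableSpace α] {μ : Measure α}
    [IsFiniteMeasure μ] {K : Set α} (hK : IsCompact K) (hμK : ∀ᵐ x ∂μ, x ∈ K) {f : α → E}
    (hf : ContinuousOn f K) : Integrable f μ := by
  simpa only [IntegrableOn, Measure.restrict_eq_self_of_ae_mem hμK] using
    hf.integrableOn_compact (μ := μ) hK

lemma analyticAt_integral_continuousMap [CompactSpace α] [BorelSpace α]
    [SecondCountableTopologyEither α E] [NormedSpace ℝ E] [CompleteSpace E] {F : Type*}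
    [NormedAddCommGroup F] [NormedSpace ℝ F] (μ : Measure α) [IsFiniteMeasure μ] {φ : F → C(α, E)}
    {y : F} (hφ : AnalyticAt ℝ φ y) : AnalyticAt ℝ (fun y' => ∫ x, φ y' x ∂μ) y := by
  let ℓ : C(α, E) →L[ℝ] E := L1.integralCLM ∘L ContinuousMap.toLp 1 μ ℝ
  have hℓ : ∀ f, ℓ f = ∫ x, f x ∂μ := fun f =>
    (L1.integral_eq _).symm.trans <|
      (L1.integral_eq_integral _).trans (integral_congr_ae (ContinuousMap.coeFn_toLp μ f))
  simpa only [Function.comp_def, hℓ] using (ℓ.analyticAt _).comp hφ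

end IntegralOnCompact

section ResolventIntegral

variable {R : Type*} [NormedRing R] [NormedAlgebra ℂ R] {μ : Measure ℝ} {K : Set ℝ}
  {A B Y : R}

/-- The integral `∫ ((1 - λA)⁻¹ B)ᵐ (1 - λY)⁻¹ dμ(λ)`. For `Y = A` it carries the Taylor
coefficients of `f` at `A` in direction `B`, and for `Y = A + zB` it is the Taylor remainder. -/
noncomputable def resolventIntegral (μ : Measure ℝ) (m : ℕ) (A B Y : R) : R :=
  ∫ s, ((1 - (s : ℂ) • A)⁻¹ʳ * B) ^ m * (1 - (s : ℂ) • Y)⁻¹ʳ ∂μ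

lemma resolventIntegral_smul (m : ℕ) (z : ℂ) :
    resolventIntegral μ m A (z • B) Y = z ^ m • resolventIntegral μ m A B Y := by
  simp only [resolventIntegral, mul_smul_comm, _root_.smul_pow, smul_mul_assoc, integral_smul]

variable [CompleteSpace R]

lemma eventually_forall_isUnit_one_sub_smul (hK : IsCompact K)
    (hA : ∀ s ∈ K, IsUnit (1 - (s : ℂ) • A)) :
    ∀ᶠ Y in 𝓝 A, ∀ s ∈ K, IsUnit (1 - (s : ℂ) • Y) :=
  hK.eventually_forall_of_forall_eventually fun s hs =>
    ContinuousAt.eventually_mem (f := fun p : R × ℝ => 1 - (p.2 : ℂ) • p.1) (x := (A, s))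
      (by fun_prop) (Units.isOpen.mem_nhds (hA s hs))

lemma eventually_forall_isUnit_one_sub_smul_add_smul (hK : IsCompact K)
    (hA : ∀ s ∈ K, IsUnit (1 - (s : ℂ) • A)) (B : R) :
    ∀ᶠ t : ℝ in 𝓝 0, ∀ s ∈ K, IsUnit (1 - (s : ℂ) • (A + t • B)) := by
  have hline : Filter.Tendsto (fun t : ℝ => A + t • B) (𝓝 0) (𝓝 A) := by
    simpa using (by fun_prop : Continuous fun t : ℝ => A + t • B).tendsto 0
  exact hline.eventually (eventually_forall_isUnit_one_sub_smul hK hA)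

lemma continuousOn_inverse_one_sub_smul (hY : ∀ s ∈ K, IsUnit (1 - (s : ℂ) • Y)) :
    ContinuousOn (fun s : ℝ => (1 - (s : ℂ) • Y)⁻¹ʳ) K := fun s hs => by
  obtain ⟨u, hu⟩ := hY s hs
  have hcont : ContinuousAt (fun s : ℝ => 1 - (s : ℂ) • Y) s := by fun_prop
  exact (ContinuousAt.comp' (g := Ring.inverse)
    (hu ▸ NormedRing.inverse_continuousAt u) hcont).continuousWithinAt

lemma integrable_pow_mul_inverse_one_sub_smul [IsFiniteMeasure μ] (hK : IsCompact K)
    (hμK : ∀ᵐ s ∂μ, s ∈ K) (hY : ∀ s ∈ K, IsUnit (1 - (s : ℂ) • Y)) (n : ℕ) :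
    Integrable (fun s : ℝ => Y ^ n * (1 - (s : ℂ) • Y)⁻¹ʳ) μ :=
  integrable_of_continuousOn_of_ae_mem hK hμK <|
    continuousOn_const.mul (continuousOn_inverse_one_sub_smul hY)

lemma integrable_resolventIntegrand [IsFiniteMeasure μ] (hK : IsCompact K)
    (hμK : ∀ᵐ s ∂μ, s ∈ K) (hA : ∀ s ∈ K, IsUnit (1 - (s : ℂ) • A))
    (hY : ∀ s ∈ K, IsUnit (1 - (s : ℂ) • Y)) (B : R) (m : ℕ) :
    Integrable (fun s : ℝ => ((1 - (s : ℂ) • A)⁻¹ʳ * B) ^ m * (1 - (s : ℂ) • Y)⁻¹ʳ) μ :=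
  integrable_of_continuousOn_of_ae_mem hK hμK <|
    (((continuousOn_inverse_one_sub_smul hA).mul continuousOn_const).pow m).mul
      (continuousOn_inverse_one_sub_smul hY)

lemma analyticAt_resolventIntegral [IsFiniteMeasure μ] (hK : IsCompact K)
    (hμK : ∀ᵐ s ∂μ, s ∈ K) (hA : ∀ s ∈ K, IsUnit (1 - (s : ℂ) • A))
    (hY : ∀ s ∈ K, IsUnit (1 - (s : ℂ) • Y)) (B : R) (m : ℕ) :
    AnalyticAt ℝ (resolventIntegral μ m A B) Y := by
  have : CompactSpace K := isCompact_iff_compactSpace.1 hK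
  let G : C(K, R) := ⟨fun s => ((1 - ((s : ℝ) : ℂ) • A)⁻¹ʳ * B) ^ m,
    ((((continuousOn_inverse_one_sub_smul hA).domRestrict).mul continuous_const).pow m)⟩
  let ι : C(K, R) := ⟨fun s => algebraMap ℂ R (s : ℝ), by fun_prop⟩
  let Φ : R → C(K, R) := fun Z => 1 - ι * ContinuousLinearMap.const ℝ K Z
  have hΦ : ∀ Z (s : K), Φ Z s = 1 - ((s : ℝ) : ℂ) • Z := fun Z s => by
    simp [Φ, ι, Algebra.smul_def]
  have hΦan : AnalyticAt ℝ Φ Y :=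
    analyticAt_const.sub (analyticAt_const.mul (ContinuousLinearMap.analyticAt _ _))
  have hunit : IsUnit (Φ Y) := (ContinuousMap.isUnit_iff_forall_isUnit _).2 fun s =>
    (hΦ Y s).symm ▸ hY s s.2
  have hinv : AnalyticAt ℝ (fun Z => (Φ Z)⁻¹ʳ) Y := by
    obtain ⟨u, hu⟩ := hunit
    exact AnalyticAt.comp (g := Ring.inverse) (hu ▸ analyticAt_inverse u) hΦan
  have hprod : AnalyticAt ℝ (fun Z => G * (Φ Z)⁻¹ʳ) Y := analyticAt_const.mul hinv
  refine (analyticAt_integral_continuousMap (μ.comap ((↑) : K → ℝ)) hprod).congr ?_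
  filter_upwards [hΦan.continuousAt.eventually_mem (Units.isOpen.mem_nhds hunit)] with Z hZ
  have hval : ∀ s : K, (G * (Φ Z)⁻¹ʳ) s =
      ((1 - ((s : ℝ) : ℂ) • A)⁻¹ʳ * B) ^ m * (1 - ((s : ℝ) : ℂ) • Z)⁻¹ʳ := fun s => by
    rw [ContinuousMap.mul_apply, continuousMap_inverse_apply hZ, hΦ]
    rfl
  rw [integral_congr_ae (.of_forall hval),
    integral_subtype_comap hK.measurableSet
      (fun s : ℝ => ((1 - (s : ℂ) • A)⁻¹ʳ * B) ^ m * (1 - (s : ℂ) • Z)⁻¹ʳ),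
    Measure.restrict_eq_self_of_ae_mem hμK, resolventIntegral]

end ResolventIntegral

section TaylorExpansion

variable {R : Type*} [NormedRing R] [NormedAlgebra ℂ R] {μ : Measure ℝ} {K : Set ℝ} {A B Y : R}

/-- The Taylor polynomial of order `n` of `z ↦ P(A + zB) + ∫ (A + zB)ⁿ (1 - λ(A + zB))⁻¹ dμ(λ)`
at `0`, written through `resolventIntegral` rather than through derivatives so that it makes sense
for complex `z`. -/
noncomputable def taylorPolynomial (P : ℝ[X]) (μ : Measure ℝ) (n : ℕ) (A B : R) : R[X] :=
  aeval (pencil A B) (P.map ofRealHom) +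
    ∑ m ∈ Finset.range n,
      C (resolventIntegral μ m A B A * A) * X ^ m * pencil A B ^ (n - 1 - m)

lemma degree_taylorPolynomial_lt {P : ℝ[X]} {n : ℕ} (hP : P.degree < n) (μ : Measure ℝ) (A B : R) :
    (taylorPolynomial P μ n A B).degree < n := by
  have hPoly : (aeval (pencil A B) (P.map ofRealHom)).degree < n :=
    degree_aeval_pencil_lt A B (degree_map_le.trans_lt hP)
  rw [← mem_degreeLT] at hPoly ⊢
  refine add_mem hPoly (sum_mem fun m hm => ?_)
  have hmn : m + (n - 1 - m) < n := by have := Finset.mem_range.1 hm; omega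
  rw [mem_degreeLT]
  calc (C (resolventIntegral μ m A B A * A) * X ^ m * pencil A B ^ (n - 1 - m)).degree
      ≤ (m : WithBot ℕ) + (n - 1 - m : ℕ) :=
        degree_mul_le_of_le (degree_C_mul_X_pow_le _ _) (degree_pencil_pow_le _ _ _)
    _ < n := by exact_mod_cast hmn

variable [CompleteSpace R]

lemma integral_pow_mul_inverse_one_sub_smul [IsFiniteMeasure μ] (hK : IsCompact K)
    (hμK : ∀ᵐ s ∂μ, s ∈ K) (hA : ∀ s ∈ K, IsUnit (1 - (s : ℂ) • A))
    (hY : ∀ s ∈ K, IsUnit (1 - (s : ℂ) • Y)) (n : ℕ) :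
    ∫ s : ℝ, Y ^ n * (1 - (s : ℂ) • Y)⁻¹ʳ ∂μ =
      ∑ m ∈ Finset.range n, resolventIntegral μ m A (Y - A) A * A * Y ^ (n - 1 - m) +
        resolventIntegral μ n A (Y - A) Y := by
  have hint := integrable_resolventIntegrand hK hμK hA hA (Y - A)
  calc ∫ s : ℝ, Y ^ n * (1 - (s : ℂ) • Y)⁻¹ʳ ∂μ
      = ∫ s : ℝ, ∑ m ∈ Finset.range n,
          ((1 - (s : ℂ) • A)⁻¹ʳ * (Y - A)) ^ m * (1 - (s : ℂ) • A)⁻¹ʳ * A * Y ^ (n - 1 - m) +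
          ((1 - (s : ℂ) • A)⁻¹ʳ * (Y - A)) ^ n * (1 - (s : ℂ) • Y)⁻¹ʳ ∂μ :=
        integral_congr_ae <| hμK.mono fun s hs =>
          pow_mul_inverse_one_sub_smul (hA s hs) (hY s hs) n
    _ = _ := by
      rw [integral_add (integrable_finsetSum _ fun m _ => ((hint m).mul_const A).mul_const _)
          (integrable_resolventIntegrand hK hμK hA hY _ n),
        integral_finsetSum _ fun m _ => ((hint m).mul_const A).mul_const _]
      congr 1
      refine Finset.sum_congr rfl fun m _ => ?_
      rw [integral_mul_const_of_integrable ((hint m).mul_const A),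
        integral_mul_const_of_integrable (hint m), resolventIntegral]

lemma aeval_add_integral_eq_evalScalar_taylorPolynomial [IsFiniteMeasure μ] (hK : IsCompact K)
    (hμK : ∀ᵐ s ∂μ, s ∈ K) (hA : ∀ s ∈ K, IsUnit (1 - (s : ℂ) • A)) {z : ℂ}
    (hY : ∀ s ∈ K, IsUnit (1 - (s : ℂ) • (A + z • B))) (P : ℝ[X]) (n : ℕ) :
    aeval (A + z • B) (P.map ofRealHom) +
        ∫ s : ℝ, (A + z • B) ^ n * (1 - (s : ℂ) • (A + z • B))⁻¹ʳ ∂μ =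
      evalScalar z (taylorPolynomial P μ n A B) +
        z ^ n • resolventIntegral μ n A B (A + z • B) := by
  rw [integral_pow_mul_inverse_one_sub_smul hK hμK hA hY, add_sub_cancel_left, taylorPolynomial,
    map_add, map_sum, evalScalar_aeval_pencil, ← add_assoc, resolventIntegral_smul]
  congr 2
  refine Finset.sum_congr rfl fun m _ => ?_
  rw [map_mul, map_mul, map_pow, map_pow, evalScalar_C, evalScalar_X, evalScalar_pencil,
    resolventIntegral_smul, ← map_pow, ← Algebra.commutes, ← Algebra.smul_def, smul_mul_assoc]

end TaylorExpansion

section Expansion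

variable {P : ℝ[X]} {μ : Measure ℝ} [IsFiniteMeasure μ] {K : Set ℝ} {A B : H →L[ℂ] H} {n : ℕ}

lemma fcal_add_smul_eq_sum_coeff_taylorPolynomial (hK : IsCompact K) (hμK : ∀ᵐ s ∂μ, s ∈ K)
    (hP : P.degree < n) (hA : ∀ s ∈ K, IsUnit (1 - (s : ℂ) • A)) {z : ℂ}
    (hY : ∀ s ∈ K, IsUnit (1 - (s : ℂ) • (A + z • B))) :
    fcal P μ n (A + z • B) =
      ∑ j ∈ Finset.range n, z ^ j • (taylorPolynomial P μ n A B).coeff j +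
        z ^ n • resolventIntegral μ n A B (A + z • B) := by
  rw [← evalScalar_eq_sum_range (degree_taylorPolynomial_lt hP μ A B),
    ← aeval_add_integral_eq_evalScalar_taylorPolynomial hK hμK hA hY, fcal]

lemma iteratedDeriv_fcal_add_smul (hK : IsCompact K) (hμK : ∀ᵐ s ∂μ, s ∈ K)
    (hP : P.degree < n) (hA : ∀ s ∈ K, IsUnit (1 - (s : ℂ) • A)) (B : H →L[ℂ] H) {j : ℕ}
    (hj : j < n) :
    iteratedDeriv j (fun t : ℝ => fcal P μ n (A + t • B)) 0 =
      (j.factorial : ℝ) • (taylorPolynomial P μ n A B).coeff j := by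
  have hrem : AnalyticAt ℝ (fun t : ℝ => resolventIntegral μ n A B (A + t • B)) 0 := by
    refine AnalyticAt.fun_comp (g := resolventIntegral μ n A B) ?_ (by fun_prop)
    simpa using analyticAt_resolventIntegral hK hμK hA hA B n
  refine iteratedDeriv_zero_of_eventuallyEq_sum_add_pow_smul hrem ?_ hj
  filter_upwards [eventually_forall_isUnit_one_sub_smul_add_smul hK hA B] with t ht
  simpa only [← ofReal_pow, Complex.coe_smul] using
    fcal_add_smul_eq_sum_coeff_taylorPolynomial (z := t) hK hμK hP hA (by simpa using ht)

lemma fcal_add_smul_eq_taylor (hK : IsCompact K) (hμK : ∀ᵐ s ∂μ, s ∈ K)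
    (hP : P.degree < n) (hA : ∀ s ∈ K, IsUnit (1 - (s : ℂ) • A)) {z : ℂ}
    (hY : ∀ s ∈ K, IsUnit (1 - (s : ℂ) • (A + z • B))) :
    fcal P μ n (A + z • B) =
      ∑ j ∈ Finset.range n, z ^ j • (j.factorial : ℝ)⁻¹ •
          iteratedDeriv j (fun t : ℝ => fcal P μ n (A + t • B)) 0 +
        z ^ n • resolventIntegral μ n A B (A + z • B) := by
  rw [fcal_add_smul_eq_sum_coeff_taylorPolynomial hK hμK hP hA hY]
  congr 1
  refine Finset.sum_congr rfl fun j hj => ?_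
  rw [iteratedDeriv_fcal_add_smul hK hμK hP hA B (Finset.mem_range.1 hj),
    inv_smul_smul₀ (by positivity)]

end Expansion

section CStarAlgebra

variable {𝔄 : Type*} [CStarAlgebra 𝔄] {A B : 𝔄}

lemma coe_realPart_mul_mul_star (E W : 𝔄) :
    (ℜ (E * W * star E) : 𝔄) = E * ℜ W * star E := by
  simp only [realPart_apply_coe, star_mul, star_star, mul_add, add_mul, mul_smul_comm,
    smul_mul_assoc, mul_assoc]

lemma coe_realPart_one_sub_smul_add_I_smul (hA : IsSelfAdjoint A) (hB : IsSelfAdjoint B) (s : ℝ) :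
    (ℜ (1 - (s : ℂ) • (A + I • B)) : 𝔄) = 1 - (s : ℂ) • A := by
  simp [hA.coe_realPart, hB.imaginaryPart, realPart_I_smul]

lemma isUnit_one_add_I_smul_of_isSelfAdjoint (hA : IsSelfAdjoint A) : IsUnit (1 + I • A) := by
  have hI : I ∉ spectrum ℂ A := fun h => by
    simpa using congrArg Complex.im (hA.mem_spectrum_eq_re h)
  have hunit : IsUnit (algebraMap ℂ 𝔄 I - A) := spectrum.notMem_iff.1 hI
  have hfactor : 1 + I • A = (-I) • (algebraMap ℂ 𝔄 I - A) := by
    rw [smul_sub, Algebra.algebraMap_eq_smul_one, smul_smul, neg_mul, I_mul_I]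
    simp
  rw [hfactor]
  exact hunit.smul (Units.mk0 (-I) (neg_ne_zero.2 I_ne_zero))

variable [PartialOrder 𝔄] [StarOrderedRing 𝔄]

lemma isUnit_of_isStrictlyPositive_realPart {W : 𝔄} (hW : IsStrictlyPositive (ℜ W : 𝔄)) :
    IsUnit W := by
  obtain ⟨b, hb, hb_sa, hWb⟩ :=
    CStarAlgebra.isStrictlyPositive_iff_exists_isUnit_and_isSelfAdjoint_and_eq_mul_self.1 hW
  have hconj : IsSelfAdjoint (b⁻¹ʳ * (ℑ W : 𝔄) * b⁻¹ʳ) := by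
    have hinv : IsSelfAdjoint b⁻¹ʳ := hb_sa.ringInverse
    simpa only [hinv.star_eq] using (ℑ W).2.conjugate b⁻¹ʳ
  have hfactor : W = b * (1 + I • (b⁻¹ʳ * (ℑ W : 𝔄) * b⁻¹ʳ)) * b := by
    conv_lhs => rw [← realPart_add_I_smul_imaginaryPart W, hWb]
    simp only [mul_add, add_mul, mul_one, mul_smul_comm, smul_mul_assoc, mul_assoc,
      Ring.inverse_mul_cancel _ hb, Ring.mul_inverse_cancel_left _ _ hb]
  rw [hfactor]
  exact (hb.mul (isUnit_one_add_I_smul_of_isSelfAdjoint hconj)).mul hb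

lemma realPart_inverse_nonneg {N : 𝔄} (hN : IsUnit N) (hre : 0 ≤ ℜ N) : 0 ≤ ℜ N⁻¹ʳ := by
  have hinv : N⁻¹ʳ * star N * star N⁻¹ʳ = N⁻¹ʳ := by
    rw [mul_assoc, ← star_mul, Ring.inverse_mul_cancel _ hN, star_one, mul_one]
  have hstar : ℜ (star N) = ℜ N := Subtype.ext <| by
    simp only [realPart_apply_coe, star_star, add_comm]
  rw [← hinv, ← Subtype.coe_le_coe, coe_realPart_mul_mul_star, hstar]
  exact star_right_conjugate_nonneg hre _

lemma isStrictlyPositive_one_sub_smul (hA : IsSelfAdjoint A) {s : ℝ}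
    (hs : ∀ x ∈ spectrum ℝ A, s * x < 1) : IsStrictlyPositive (1 - (s : ℂ) • A) := by
  have hcfc : 1 - (s : ℂ) • A = cfc (fun x : ℝ => 1 - s * x) A := by
    rw [cfc_sub .., cfc_const_one .., cfc_const_mul_id .., Complex.coe_smul]
  rw [hcfc, cfc_isStrictlyPositive_iff ..]
  exact fun x hx => sub_pos.2 (hs x hx)

lemma isStrictlyPositive_one_sub_smul_of_mem_Icc (hA : IsSelfAdjoint A)
    (hspA : spectrum ℂ A ⊆ (fun x : ℝ => (x : ℂ)) '' Set.Ioo (-1 : ℝ) 1) {s : ℝ}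
    (hs : s ∈ Set.Icc (-1 : ℝ) 1) : IsStrictlyPositive (1 - (s : ℂ) • A) :=
  isStrictlyPositive_one_sub_smul hA fun x hx => by
    obtain ⟨y, hy, hyx⟩ := hspA ((spectrum.algebraMap_mem_iff ℂ).2 hx)
    obtain rfl : y = x := ofReal_injective hyx
    calc s * y ≤ |s| * |y| := (le_abs_self _).trans_eq (abs_mul s y)
      _ ≤ 1 * |y| := by gcongr; exact abs_le.2 hs
      _ < 1 := by rw [one_mul]; exact abs_lt.2 hy

lemma isUnit_one_sub_smul_add_I_smul (hA : IsSelfAdjoint A) (hB : IsSelfAdjoint B) {s : ℝ}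
    (hs : IsStrictlyPositive (1 - (s : ℂ) • A)) : IsUnit (1 - (s : ℂ) • (A + I • B)) :=
  isUnit_of_isStrictlyPositive_realPart <| by
    rwa [coe_realPart_one_sub_smul_add_I_smul hA hB]

lemma realPart_resolventIntegrand_nonneg (hA : IsSelfAdjoint A) (hB : IsSelfAdjoint B) {s : ℝ}
    (hs : IsStrictlyPositive (1 - (s : ℂ) • A)) (n : ℕ) :
    0 ≤ ℜ (((1 - (s : ℂ) • A)⁻¹ʳ * B) ^ (2 * n) * (1 - (s : ℂ) • (A + I • B))⁻¹ʳ) := by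
  have hunit := isUnit_one_sub_smul_add_I_smul hA hB hs
  set Q := (1 - (s : ℂ) • A)⁻¹ʳ
  set S := (1 - (s : ℂ) • (A + I • B))⁻¹ʳ
  have hQ_sa : star Q = Q := hs.isSelfAdjoint.ringInverse.star_eq
  have hfactor : (Q * B) ^ (2 * n) * S = (Q * B) ^ n * S * star ((Q * B) ^ n) := by
    rw [star_pow, star_mul, hQ_sa, hB.star_eq, mul_assoc,
      ((semiconjBy_inverse_one_sub_smul_add hs.isUnit hunit).pow_right n).eq, ← mul_assoc,
      ← pow_add, two_mul]
  have hS : 0 ≤ ℜ S := realPart_inverse_nonneg hunit <| by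
    rw [← Subtype.coe_le_coe, coe_realPart_one_sub_smul_add_I_smul hA hB]
    exact hs.nonneg
  rw [hfactor, ← Subtype.coe_le_coe, coe_realPart_mul_mul_star]
  exact star_right_conjugate_nonneg hS _

lemma realPart_integral_nonneg {α : Type*} [MeasurableSpace α] {μ : Measure α} {F : α → 𝔄}
    (hF : Integrable F μ) (hre : ∀ᵐ x ∂μ, 0 ≤ ℜ (F x)) : 0 ≤ ℜ (∫ x, F x ∂μ) := by
  have hcomm : (ℜ (∫ x, F x ∂μ) : 𝔄) = ∫ x, (ℜ (F x) : 𝔄) ∂μ :=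
    (((selfAdjoint.submodule ℝ 𝔄).subtypeL ∘L selfAdjointPartL ℝ 𝔄).integral_comp_comm hF).symm
  rw [← Subtype.coe_le_coe, hcomm]
  exact integral_nonneg_of_ae hre

end CStarAlgebra

section SelfAdjoint

lemma isSelfAdjoint_iteratedDeriv {𝕜 F : Type*} [NontriviallyNormedField 𝕜] [StarRing 𝕜]
    [TrivialStar 𝕜] [NormedAddCommGroup F] [NormedSpace 𝕜 F] [StarAddMonoid F] [StarModule 𝕜 F]
    [ContinuousStar F] {f : 𝕜 → F} (hf : ∀ t, IsSelfAdjoint (f t)) (n : ℕ) (t : 𝕜) :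
    IsSelfAdjoint (iteratedDeriv n f t) := by
  induction n generalizing t with
  | zero => simpa only [iteratedDeriv_zero] using hf t
  | succ n ih =>
    rw [iteratedDeriv_succ, IsSelfAdjoint, ← deriv.star]
    simp only [(ih _).star_eq]

lemma isSelfAdjoint_aeval_map_ofReal {R : Type*} [Ring R] [StarRing R] [Algebra ℂ R]
    [StarModule ℂ R] {Y : R} (hY : IsSelfAdjoint Y) (P : ℝ[X]) :
    IsSelfAdjoint (aeval Y (P.map ofRealHom)) := by
  rw [aeval_eq_sum_range]
  refine isSelfAdjoint_sum _ fun i _ => ?_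
  rw [coeff_map]
  exact IsSelfAdjoint.smul (conj_ofReal _) (hY.pow i)

lemma isSelfAdjoint_integral {α F : Type*} [MeasurableSpace α] {μ : Measure α}
    [NormedAddCommGroup F] [NormedSpace ℝ F] [StarAddMonoid F] [StarModule ℝ F] [ContinuousStar F]
    {f : α → F} (hf : ∀ x, IsSelfAdjoint (f x)) : IsSelfAdjoint (∫ x, f x ∂μ) := by
  have hcomm := (starL' ℝ : F ≃L[ℝ] F).integral_comp_comm f (μ := μ)
  simpa only [IsSelfAdjoint, starL'_apply, (hf _).star_eq] using hcomm.symm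

lemma isSelfAdjoint_pow_mul_inverse_one_sub_smul {R : Type*} [Ring R] [StarRing R] [Algebra ℂ R]
    [StarModule ℂ R] {Y : R} (hY : IsSelfAdjoint Y) (s : ℝ) (n : ℕ) :
    IsSelfAdjoint (Y ^ n * (1 - (s : ℂ) • Y)⁻¹ʳ) := by
  have hsY : IsSelfAdjoint ((s : ℂ) • Y) := IsSelfAdjoint.smul (conj_ofReal s) hY
  exact ((hY.pow n).commute_iff ((IsSelfAdjoint.one R).sub hsY).ringInverse).1
    ((commute_inverse_one_sub_smul (s : ℂ) Y).pow_left n)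

lemma isSelfAdjoint_fcal {Y : H →L[ℂ] H} (hY : IsSelfAdjoint Y) (P : ℝ[X]) (μ : Measure ℝ)
    (n : ℕ) : IsSelfAdjoint (fcal P μ n Y) :=
  (isSelfAdjoint_aeval_map_ofReal hY P).add <|
    isSelfAdjoint_integral fun s => isSelfAdjoint_pow_mul_inverse_one_sub_smul hY s n

lemma coe_realPart_sum_I_pow_smul {V : Type*} [AddCommGroup V] [Module ℂ V] [StarAddMonoid V]
    [StarModule ℂ V] {c : ℕ → V} (hc : ∀ j, IsSelfAdjoint (c j)) (n : ℕ) :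
    (ℜ (∑ j ∈ Finset.range (2 * n), I ^ j • c j) : V) =
      ∑ m ∈ Finset.range n, (-1 : ℝ) ^ m • c (2 * m) := by
  have hpow : ∀ m, I ^ (2 * m) = (((-1) ^ m : ℝ) : ℂ) := fun m => by simp [pow_mul]
  induction n with
  | zero => simp
  | succ n ih =>
    have heven : (ℜ (I ^ (2 * n) • c (2 * n)) : V) = (-1 : ℝ) ^ n • c (2 * n) := by
      rw [hpow, Complex.coe_smul, map_smul, selfAdjoint.val_smul, (hc _).coe_realPart]
    have hodd : (ℜ (I ^ (2 * n + 1) • c (2 * n + 1)) : V) = 0 := by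
      rw [pow_succ, hpow, mul_smul, Complex.coe_smul, map_smul, realPart_I_smul,
        (hc _).imaginaryPart]
      simp
    rw [mul_add_one, Finset.sum_range_succ, Finset.sum_range_succ, Finset.sum_range_succ, map_add,
      map_add, AddSubgroup.coe_add, AddSubgroup.coe_add, ih, heven, hodd, add_zero]

lemma opRe_eq_realPart (Y : H →L[ℂ] H) : opRe Y = ℜ Y := by
  rw [opRe, realPart_apply_coe, ← Complex.coe_smul (2⁻¹ : ℝ)]
  norm_num

end SelfAdjoint

section RealPart

variable {P : ℝ[X]} {μ : Measure ℝ} [IsFiniteMeasure μ] {K : Set ℝ} {A B : H →L[ℂ] H}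

lemma opRe_fcal_add_I_smul_sub_taylor (hK : IsCompact K) (hμK : ∀ᵐ s ∂μ, s ∈ K) {n : ℕ}
    (hP : P.degree < (2 * n : ℕ)) (hA : IsSelfAdjoint A) (hB : IsSelfAdjoint B)
    (hA_unit : ∀ s ∈ K, IsUnit (1 - (s : ℂ) • A))
    (hX_unit : ∀ s ∈ K, IsUnit (1 - (s : ℂ) • (A + I • B))) :
    opRe (fcal P μ (2 * n) (A + I • B)) -
        ∑ m ∈ Finset.range n, ((-1 : ℝ) ^ m / (Nat.factorial (2 * m) : ℝ)) •
          iteratedDeriv (2 * m) (fun t : ℝ => fcal P μ (2 * n) (A + t • B)) 0 =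
      (-1 : ℝ) ^ n • (ℜ (resolventIntegral μ (2 * n) A B (A + I • B)) : H →L[ℂ] H) := by
  have hline : ∀ t : ℝ, IsSelfAdjoint (fcal P μ (2 * n) (A + t • B)) := fun t =>
    isSelfAdjoint_fcal (hA.add (IsSelfAdjoint.smul (.all t) hB)) P μ (2 * n)
  have hcoeff : ∀ j : ℕ, IsSelfAdjoint ((j.factorial : ℝ)⁻¹ •
      iteratedDeriv j (fun t : ℝ => fcal P μ (2 * n) (A + t • B)) 0) := fun j =>
    IsSelfAdjoint.smul (.all _) (isSelfAdjoint_iteratedDeriv hline j 0)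
  have hI : I ^ (2 * n) = (((-1) ^ n : ℝ) : ℂ) := by simp [pow_mul]
  rw [opRe_eq_realPart, fcal_add_smul_eq_taylor hK hμK hP hA_unit hX_unit, map_add,
    AddSubgroup.coe_add, coe_realPart_sum_I_pow_smul hcoeff, hI, Complex.coe_smul, map_smul,
    selfAdjoint.val_smul]
  simp only [smul_smul, ← div_eq_mul_inv, add_sub_cancel_left]

lemma realPart_resolventIntegral_nonneg (hK : IsCompact K) (hμK : ∀ᵐ s ∂μ, s ∈ K)
    (hA : IsSelfAdjoint A) (hB : IsSelfAdjoint B)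
    (hA_pos : ∀ s ∈ K, IsStrictlyPositive (1 - (s : ℂ) • A)) (n : ℕ) :
    0 ≤ ℜ (resolventIntegral μ (2 * n) A B (A + I • B)) :=
  realPart_integral_nonneg
    (integrable_resolventIntegrand hK hμK (fun s hs => (hA_pos s hs).isUnit)
      (fun s hs => isUnit_one_sub_smul_add_I_smul hA hB (hA_pos s hs)) B (2 * n))
    (hμK.mono fun s hs => realPart_resolventIntegrand_nonneg hA hB (hA_pos s hs) n)

end RealPart

theorem stmt9_general (n : ℕ) (P : Polynomial ℝ) (hP : P.degree < ((2 * n : ℕ) : WithBot ℕ))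
    (μ : Measure ℝ) [IsFiniteMeasure μ] (hμ : μ (Set.Icc (-1 : ℝ) 1)ᶜ = 0)
    (A B X : H →L[ℂ] H) (hA : IsSelfAdjoint A) (hB : IsSelfAdjoint B)
    (hspA : spectrum ℂ A ⊆ (fun x : ℝ => (x : ℂ)) '' Set.Ioo (-1 : ℝ) 1)
    (hX : X = A + Complex.I • B) :
    (∀ s ∈ Set.Icc (-1 : ℝ) 1, IsUnit (1 - (s : ℂ) • X)) ∧
    (∃ δ > (0 : ℝ), ∀ t : ℝ, |t| < δ →
        ∀ s ∈ Set.Icc (-1 : ℝ) 1, IsUnit (1 - (s : ℂ) • (A + t • B))) ∧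
    Integrable (fun s : ℝ => X ^ (2 * n) * Ring.inverse (1 - (s : ℂ) • X)) μ ∧
    (∃ δ > (0 : ℝ), ∀ t : ℝ, |t| < δ →
        Integrable
          (fun s : ℝ =>
            (A + t • B) ^ (2 * n) * Ring.inverse (1 - (s : ℂ) • (A + t • B))) μ) ∧
    ((-1 : ℝ) ^ n • (opRe (fcal P μ (2 * n) X)
      - ∑ m ∈ Finset.range n,
          ((-1 : ℝ) ^ m / (Nat.factorial (2 * m) : ℝ)) •
            iteratedDeriv (2 * m) (fun t : ℝ => fcal P μ (2 * n) (A + t • B)) 0)).IsPositive := by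
  subst hX
  have hμK : ∀ᵐ s ∂μ, s ∈ Set.Icc (-1 : ℝ) 1 := mem_ae_iff.2 hμ
  have hA_pos : ∀ s ∈ Set.Icc (-1 : ℝ) 1, IsStrictlyPositive (1 - (s : ℂ) • A) := fun _ =>
    isStrictlyPositive_one_sub_smul_of_mem_Icc hA hspA
  have hA_unit : ∀ s ∈ Set.Icc (-1 : ℝ) 1, IsUnit (1 - (s : ℂ) • A) := fun s hs =>
    (hA_pos s hs).isUnit
  have hX_unit : ∀ s ∈ Set.Icc (-1 : ℝ) 1, IsUnit (1 - (s : ℂ) • (A + I • B)) := fun s hs =>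
    isUnit_one_sub_smul_add_I_smul hA hB (hA_pos s hs)
  obtain ⟨δ, hδ, ht_unit⟩ := exists_forall_abs_lt_of_eventually_nhds_zero
    (eventually_forall_isUnit_one_sub_smul_add_smul isCompact_Icc hA_unit B)
  refine ⟨hX_unit, ⟨δ, hδ, ht_unit⟩,
    integrable_pow_mul_inverse_one_sub_smul isCompact_Icc hμK hX_unit _,
    ⟨δ, hδ, fun t ht =>
      integrable_pow_mul_inverse_one_sub_smul isCompact_Icc hμK (ht_unit t ht) _⟩, ?_⟩
  rw [opRe_fcal_add_I_smul_sub_taylor isCompact_Icc hμK hP hA hB hA_unit hX_unit, smul_smul,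
    ← mul_pow, neg_one_mul, neg_neg, one_pow, one_smul, ← nonneg_iff_isPositive]
  exact realPart_resolventIntegral_nonneg isCompact_Icc hμK hA hB hA_pos n

/-- The `4k`-tone case of the main theorem: for `f(Y) = P(Y) + ∫ Y^{4k}(I−λY)⁻¹ dμ(λ)`
with `deg P < 4k` and `μ` a finite positive measure on `[−1,1]`, all the relevant operators
are invertible, the Bochner integrals exist, and
`Re f(X) ≥ Σ_{m=0}^{2k−1} ((−1)^m/(2m)!) D^{2m}f(A;B)` for `X = A + iB`. -/
theorem stmt9 [TopologicalSpace.SeparableSpace H] (hinf : ¬ FiniteDimensional ℂ H)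
    (k : ℕ) (hk : 1 ≤ k) (P : Polynomial ℝ) (hP : P.degree < ((4 * k : ℕ) : WithBot ℕ))
    (μ : Measure ℝ) [IsFiniteMeasure μ] (hμ : μ (Set.Icc (-1 : ℝ) 1)ᶜ = 0)
    (A B X : H →L[ℂ] H) (hA : IsSelfAdjoint A) (hB : IsSelfAdjoint B)
    (hspA : spectrum ℂ A ⊆ (fun x : ℝ => (x : ℂ)) '' Set.Ioo (-1 : ℝ) 1)
    (hX : X = A + Complex.I • B) :
    (∀ s ∈ Set.Icc (-1 : ℝ) 1, IsUnit (1 - (s : ℂ) • X)) ∧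
    (∃ δ > (0 : ℝ), ∀ t : ℝ, |t| < δ →
        ∀ s ∈ Set.Icc (-1 : ℝ) 1, IsUnit (1 - (s : ℂ) • (A + t • B))) ∧
    Integrable (fun s : ℝ => X ^ (4 * k) * Ring.inverse (1 - (s : ℂ) • X)) μ ∧
    (∃ δ > (0 : ℝ), ∀ t : ℝ, |t| < δ →
        Integrable
          (fun s : ℝ =>
            (A + t • B) ^ (4 * k) * Ring.inverse (1 - (s : ℂ) • (A + t • B))) μ) ∧
    (opRe (fcal P μ (4 * k) X)
      - ∑ m ∈ Finset.range (2 * k),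
          ((-1 : ℝ) ^ m / (Nat.factorial (2 * m) : ℝ)) •
            iteratedDeriv (2 * m) (fun t : ℝ => fcal P μ (4 * k) (A + t • B)) 0).IsPositive := by
  rw [show 4 * k = 2 * (2 * k) by ring] at hP ⊢
  simpa using stmt9_general (2 * k) P hP μ hμ A B X hA hB hspA hX
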